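/- Fix m ∈ (1,2) and β ∈ (0,1). There exist constants C < ∞ and ε₀ > 0 such that for all w, z ∈ bD_m with w ≠ z and all 0 < ε < ε₀: | Δ(w, z+εN(z))^{−2} − Δ(w,z)^{−2} | ≤ C · ε^β · |w−z|^{−(4+2β)}. -/

import Mathlib

open MeasureTheory Complex
open scoped ENNReal

noncomputable section

/-- `ℂ²` with the Euclidean metric. -/
abbrev C2 := EuclideanSpace ℂ (Fin 2)

instance : MeasurableSpace C2 := borel _
instance : BorelSpace C2 := ⟨rfl⟩

/-- The defining function `ρ(w) = |w₂|² + |Re w₁|^m + (Im w₁)² − 1`. -/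
def rhom (m : ℝ) (w : C2) : ℝ := ‖w 1‖ ^ 2 + |(w 0).re| ^ m + (w 0).im ^ 2 - 1

/-- The domain `D_m = {ρ < 0}`. -/
def Dm (m : ℝ) : Set C2 := {w | rhom m w < 0}

/-- The boundary `bD_m = {ρ = 0}`. -/
def bDm (m : ℝ) : Set C2 := {w | rhom m w = 0}

/-- The Cauchy–Leray denominator
`Δ(w,z) = ((m/2)|u₁|^{m−1}·sgn(u₁) − i v₁)(w₁−z₁) + conj(w₂)(w₂−z₂)`. -/
def Deltam (m : ℝ) (w z : C2) : ℂ :=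
  ((m / 2 * |(w 0).re| ^ (m - 1) * Real.sign (w 0).re : ℝ) - I * ((w 0).im : ℂ))
      * (w 0 - z 0)
    + (starRingEnd ℂ) (w 1) * (w 1 - z 1)

/-- The real gradient `∇ρ` on `ℝ⁴ ≅ ℂ²`, written as a vector in `ℂ²`:
`∇ρ(w) = (m|u₁|^{m−1} sgn(u₁) + 2i v₁, 2w₂)`. -/
def gradRhom (m : ℝ) (w : C2) : C2 :=
  (WithLp.equiv 2 (Fin 2 → ℂ)).symm
    ![(m * |(w 0).re| ^ (m - 1) * Real.sign (w 0).re : ℝ)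
        + (2 * (w 0).im : ℝ) * I, 2 * w 1]

/-- The inward unit normal `N(z) = −∇ρ(z)/|∇ρ(z)|`. -/
def Nm (m : ℝ) (z : C2) : C2 := (-‖gradRhom m z‖⁻¹ : ℝ) • gradRhom m z

/-!
In terms of the Hermitian inner product, `Δ(w, z) = ½⟪∇ρ(w), w - z⟫`. As `m ≤ 2`, the function
`|t| ^ m` is strongly convex on `[-1, 1]`, and the tangent-plane inequality for `ρ` at `w` gives
`Re Δ(w, z) ≥ κ |w - z|²` for boundary points. Moving `z` to `z + εN(z)` subtracts
`½ε⟪∇ρ(w), N(z)⟫`, of size `O(ε)`. Its real part is negative near the diagonal, where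
`⟪∇ρ(z), N(z)⟫ = -|∇ρ(z)|`, so by compactness it is at most `Kε|w - z|²` everywhere; continuity of
`∇ρ` suffices here, although `∇ρ` is only Hölder continuous. Hence `|Δ(w, z + εN(z))|` is also at
least `½κ|w - z|²` for small `ε`, and with `r = |w - z|` the difference of inverse squares is
`O(r⁻⁴ min(1, ε/r²))`, which is at most `O(r⁻⁴ (ε/r²) ^ β)`.
-/

section StrongConvexity

open Set Filter Topology

lemma add_lineDeriv_add_sq_le_of_strongConvexOn {E : Type*} [NormedAddCommGroup E]
    [NormedSpace ℝ E] {s : Set E} {c f' : ℝ} {f : E → ℝ} {x y : E} (hf : StrongConvexOn s c f)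
    (hx : x ∈ s) (hy : y ∈ s) (hf' : HasLineDerivAt ℝ f f' x (y - x)) :
    f x + f' + c / 2 * ‖y - x‖ ^ 2 ≤ f y := by
  have slope_le : ∀ᶠ t : ℝ in 𝓝[>] 0, t⁻¹ • (f (x + t • (y - x)) - f x)
      ≤ f y - f x - (1 - t) * (c / 2 * ‖y - x‖ ^ 2) := by
    filter_upwards [Ioo_mem_nhdsGT one_pos] with t ⟨ht0, ht1⟩
    have hseg := hf.2 hx hy (sub_nonneg.2 ht1.le) ht0.le (sub_add_cancel 1 t)
    rw [show (1 - t) • x + t • y = x + t • (y - x) by module, norm_sub_rev] at hseg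
    simp only [smul_eq_mul] at hseg ⊢
    rw [inv_mul_le_iff₀ ht0]
    linarith
  have rhs_tendsto : Tendsto (fun t : ℝ => f y - f x - (1 - t) * (c / 2 * ‖y - x‖ ^ 2)) (𝓝[>] 0)
      (𝓝 (f y - f x - (1 - 0) * (c / 2 * ‖y - x‖ ^ 2))) :=
    Continuous.continuousWithinAt (by fun_prop)
  linarith [le_of_tendsto_of_tendsto hf'.tendsto_slope_zero_right rhs_tendsto slope_le]

variable {p : ℝ}

lemma hasDerivAt_rpow_sub_mul_sq {x : ℝ} (hx : 0 < x) :
    HasDerivAt (fun t : ℝ => t ^ p - p * (p - 1) / 2 * t ^ 2)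
      (p * x ^ (p - 1) - p * (p - 1) * x) x :=
  ((Real.hasDerivAt_rpow_const (Or.inl hx.ne')).sub
    (((hasDerivAt_id x).pow 2).const_mul (p * (p - 1) / 2))).congr_deriv (by simp; ring)

lemma convexOn_rpow_sub_mul_sq (hp1 : 1 ≤ p) (hp2 : p ≤ 2) :
    ConvexOn ℝ (Icc 0 1) fun t : ℝ => t ^ p - p * (p - 1) / 2 * t ^ 2 := by
  refine convexOn_of_hasDerivWithinAt2_nonneg (convex_Icc 0 1)
    (f' := fun t => p * t ^ (p - 1) - p * (p - 1) * t)
    (f'' := fun t => p * (p - 1) * (t ^ (p - 2) - 1)) ?_ ?_ ?_ ?_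
  · exact ((Real.continuous_rpow_const (by linarith)).sub (by fun_prop)).continuousOn
  all_goals
    rw [interior_Icc]
    rintro t ⟨ht0, ht1⟩
  · exact (hasDerivAt_rpow_sub_mul_sq ht0).hasDerivWithinAt
  · refine HasDerivAt.hasDerivWithinAt ?_
    refine (((Real.hasDerivAt_rpow_const (Or.inl ht0.ne')).const_mul p).sub
      ((hasDerivAt_id t).const_mul (p * (p - 1)))).congr_deriv ?_
    rw [show p - 1 - 1 = p - 2 by ring]
    ring
  · have := Real.one_le_rpow_of_pos_of_le_one_of_nonpos ht0 ht1.le (sub_nonpos.2 hp2)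
    exact mul_nonneg (mul_nonneg (by linarith) (by linarith)) (by linarith)

lemma monotoneOn_rpow_sub_mul_sq (hp1 : 1 ≤ p) (hp2 : p ≤ 2) :
    MonotoneOn (fun t : ℝ => t ^ p - p * (p - 1) / 2 * t ^ 2) (Icc 0 1) := by
  refine monotoneOn_of_hasDerivWithinAt_nonneg (convex_Icc 0 1)
    (f' := fun t => p * t ^ (p - 1) - p * (p - 1) * t) ?_ ?_ ?_
  · exact ((Real.continuous_rpow_const (by linarith)).sub (by fun_prop)).continuousOn
  all_goals
    rw [interior_Icc]
    rintro t ⟨ht0, ht1⟩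
  · exact (hasDerivAt_rpow_sub_mul_sq ht0).hasDerivWithinAt
  · have le_rpow : t ≤ t ^ (p - 1) :=
      Real.self_le_rpow_of_le_one ht0.le ht1.le (by linarith)
    have mul_le : (p - 1) * t ≤ t := mul_le_of_le_one_left ht0.le (by linarith)
    rw [mul_assoc, ← mul_sub]
    exact mul_nonneg (by linarith) (by linarith)

theorem strongConvexOn_norm_rpow {E : Type*} [NormedAddCommGroup E] [InnerProductSpace ℝ E]
    (hp1 : 1 ≤ p) (hp2 : p ≤ 2) :
    StrongConvexOn (Metric.closedBall (0 : E) 1) (p * (p - 1)) fun x => ‖x‖ ^ p := by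
  have hball : Convex ℝ (Metric.closedBall (0 : E) 1) := convex_closedBall 0 1
  have himage : norm '' Metric.closedBall (0 : E) 1 ⊆ Icc 0 1 := by
    rintro _ ⟨x, hx, rfl⟩
    exact ⟨norm_nonneg x, mem_closedBall_zero_iff.1 hx⟩
  have himage_convex : Convex ℝ (norm '' Metric.closedBall (0 : E) 1) :=
    (hball.isPreconnected.image _ continuous_norm.continuousOn).ordConnected.convex
  rw [strongConvexOn_iff_convex]
  exact ((convexOn_rpow_sub_mul_sq hp1 hp2).subset himage himage_convex).comp
    (convexOn_norm hball) ((monotoneOn_rpow_sub_mul_sq hp1 hp2).mono himage)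

lemma abs_rpow_sub_one_mul_sign (p x : ℝ) :
    |x| ^ (p - 1) * Real.sign x = |x| ^ (p - 2) * x := by
  rcases eq_or_ne x 0 with rfl | hx
  · simp
  have sign_mul_abs : Real.sign x * |x| = x := by
    rcases hx.lt_or_gt with hx | hx
    · rw [Real.sign_of_neg hx, abs_of_neg hx, neg_one_mul, neg_neg]
    · rw [Real.sign_of_pos hx, abs_of_pos hx, one_mul]
  rw [show p - 1 = p - 2 + 1 by ring, Real.rpow_add_one (abs_ne_zero.2 hx), mul_assoc,
    mul_comm |x|, sign_mul_abs]

lemma hasDerivAt_abs_rpow_sign (hp : 1 < p) (x : ℝ) :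
    HasDerivAt (fun t : ℝ => |t| ^ p) (p * |x| ^ (p - 1) * Real.sign x) x := by
  rw [mul_assoc, abs_rpow_sub_one_mul_sign, ← mul_assoc]
  exact hasDerivAt_abs_rpow x hp

lemma continuous_mul_abs_rpow_mul_sign (hp : 1 < p) :
    Continuous fun x : ℝ => p * |x| ^ (p - 1) * Real.sign x := by
  have hderiv : deriv (fun t : ℝ => ‖t‖ ^ p) = fun x => p * |x| ^ (p - 1) * Real.sign x :=
    funext fun x => (hasDerivAt_abs_rpow_sign hp x).deriv
  exact hderiv ▸ (contDiff_norm_rpow hp).continuous_deriv le_rfl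

lemma abs_rpow_add_mul_sub_add_sq_le (hp1 : 1 < p) (hp2 : p ≤ 2) {x y : ℝ} (hx : |x| ≤ 1)
    (hy : |y| ≤ 1) :
    |x| ^ p + p * |x| ^ (p - 1) * Real.sign x * (y - x) + p * (p - 1) / 2 * (y - x) ^ 2
      ≤ |y| ^ p := by
  have hline : HasLineDerivAt ℝ (fun t : ℝ => ‖t‖ ^ p)
      (p * |x| ^ (p - 1) * Real.sign x * (y - x)) x (y - x) := by
    simpa [mul_comm] using (hasDerivAt_abs_rpow_sign hp1 x).hasFDerivAt.hasLineDerivAt (y - x)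
  simpa using add_lineDeriv_add_sq_le_of_strongConvexOn (strongConvexOn_norm_rpow hp1.le hp2)
    (mem_closedBall_zero_iff.2 hx) (mem_closedBall_zero_iff.2 hy) hline

end StrongConvexity

section InverseSquare

lemma min_one_le_rpow {x β : ℝ} (hx : 0 ≤ x) (hβ0 : 0 ≤ β) (hβ1 : β ≤ 1) : min 1 x ≤ x ^ β := by
  rcases le_total x 1 with hx1 | hx1
  · exact (min_le_right 1 x).trans (Real.self_le_rpow_of_le_one hx hx1 hβ1)
  · exact (min_le_left 1 x).trans (Real.one_le_rpow hx1 hβ0)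

variable {𝕜 : Type*} [NormedField 𝕜] {a b : 𝕜} {L : ℝ}

lemma norm_inv_sq_sub_inv_sq_le_mul_min (hL : 0 < L) (ha : L ≤ ‖a‖) (hb : L ≤ ‖b‖) :
    ‖(a ^ 2)⁻¹ - (b ^ 2)⁻¹‖ ≤ 2 / L ^ 2 * min 1 (‖a - b‖ / L) := by
  have ha0 : a ≠ 0 := norm_pos_iff.1 (hL.trans_le ha)
  have hb0 : b ≠ 0 := norm_pos_iff.1 (hL.trans_le hb)
  have ha' : ‖a⁻¹‖ ≤ L⁻¹ := by rw [norm_inv]; gcongr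
  have hb' : ‖b⁻¹‖ ≤ L⁻¹ := by rw [norm_inv]; gcongr
  rw [mul_min_of_nonneg _ _ (by positivity), le_min_iff]
  constructor
  · calc ‖(a ^ 2)⁻¹ - (b ^ 2)⁻¹‖ ≤ ‖a⁻¹‖ ^ 2 + ‖b⁻¹‖ ^ 2 := by
          rw [← inv_pow, ← inv_pow, ← norm_pow, ← norm_pow]
          exact norm_sub_le _ _
      _ ≤ L⁻¹ ^ 2 + L⁻¹ ^ 2 := by gcongr
      _ = 2 / L ^ 2 * 1 := by ring
  · have factor : (a ^ 2)⁻¹ - (b ^ 2)⁻¹ = (b - a) * (a⁻¹ * b⁻¹ * (a⁻¹ + b⁻¹)) := by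
      field_simp
      ring
    calc ‖(a ^ 2)⁻¹ - (b ^ 2)⁻¹‖ = ‖a - b‖ * (‖a⁻¹‖ * ‖b⁻¹‖ * ‖a⁻¹ + b⁻¹‖) := by
          rw [factor, norm_mul, norm_mul, norm_mul, norm_sub_rev]
      _ ≤ ‖a - b‖ * (L⁻¹ * L⁻¹ * (L⁻¹ + L⁻¹)) := by
          gcongr
          exact norm_add_le_of_le ha' hb'
      _ = 2 / L ^ 2 * (‖a - b‖ / L) := by ring

lemma norm_inv_sq_sub_inv_sq_le_rpow {κ M ε r β : ℝ} (hκ : 0 < κ) (hε : 0 ≤ ε) (hr : 0 < r)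
    (hβ0 : 0 ≤ β) (hβ1 : β ≤ 1) (ha : κ * r ^ 2 ≤ ‖a‖) (hb : κ * r ^ 2 ≤ ‖b‖)
    (hab : ‖a - b‖ ≤ M * ε) :
    ‖(a ^ 2)⁻¹ - (b ^ 2)⁻¹‖ ≤ 2 / κ ^ 2 * max 1 (M / κ) * ε ^ β * r ^ (-(4 + 2 * β)) := by
  set A := max 1 (M / κ)
  have hA : 1 ≤ A := le_max_left _ _
  have ratio_le : ‖a - b‖ / (κ * r ^ 2) ≤ A * (ε / r ^ 2) :=
    calc ‖a - b‖ / (κ * r ^ 2) ≤ M * ε / (κ * r ^ 2) := by gcongr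
      _ = M / κ * (ε / r ^ 2) := by ring
      _ ≤ A * (ε / r ^ 2) := by gcongr; exact le_max_right _ _
  have split_rpow : r ^ (-(4 + 2 * β)) = (r ^ 4)⁻¹ * ((r ^ 2) ^ β)⁻¹ := by
    rw [Real.rpow_neg hr.le, Real.rpow_add hr, mul_inv, Real.rpow_mul hr.le]
    norm_cast
  calc ‖(a ^ 2)⁻¹ - (b ^ 2)⁻¹‖
      ≤ 2 / (κ * r ^ 2) ^ 2 * min 1 (‖a - b‖ / (κ * r ^ 2)) :=
        norm_inv_sq_sub_inv_sq_le_mul_min (by positivity) ha hb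
    _ ≤ 2 / (κ * r ^ 2) ^ 2 * (A * (ε / r ^ 2)) ^ β := by
        gcongr
        exact (min_le_min_left 1 ratio_le).trans (min_one_le_rpow (by positivity) hβ0 hβ1)
    _ = 2 / κ ^ 2 * A ^ β * ε ^ β * r ^ (-(4 + 2 * β)) := by
        rw [Real.mul_rpow (by positivity) (by positivity), Real.div_rpow hε (by positivity),
          split_rpow]
        ring
    _ ≤ 2 / κ ^ 2 * A * ε ^ β * r ^ (-(4 + 2 * β)) := by
        gcongr
        exact Real.rpow_le_self_of_one_le hA hβ1

end InverseSquare

section InwardShift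

open Set

-- Where `h ≤ 0`, the quotient `h (x, y) / dist x y ^ 2` is continuous on a compact set.
lemma exists_neg_mul_sq_dist_le_of_pos_diag {X : Type*} [MetricSpace X] {s : Set X}
    (hs : IsCompact s) {h : X × X → ℝ} (hcont : ContinuousOn h (s ×ˢ s))
    (hdiag : ∀ x ∈ s, 0 < h (x, x)) :
    ∃ K, 0 ≤ K ∧ ∀ x ∈ s, ∀ y ∈ s, -K * dist x y ^ 2 ≤ h (x, y) := by
  set t : Set (X × X) := s ×ˢ s ∩ h ⁻¹' Iic 0
  have ht : IsCompact t := (hs.prod hs).of_isClosed_subset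
    (hcont.preimage_isClosed_of_isClosed (hs.prod hs).isClosed isClosed_Iic) inter_subset_left
  have dist_pos_on_t : ∀ p ∈ t, 0 < dist p.1 p.2 := by
    rintro ⟨x, y⟩ ⟨⟨hx, -⟩, hxy⟩
    refine dist_pos.2 fun hne : x = y => ?_
    subst hne
    exact (hdiag x hx).not_ge hxy
  have hquot : ContinuousOn (fun p => h p / dist p.1 p.2 ^ 2) t :=
    (hcont.mono inter_subset_left).div (by fun_prop)
      fun p hp => (pow_pos (dist_pos_on_t p hp) 2).ne'
  obtain ⟨K, hK⟩ := ht.exists_bound_of_continuousOn hquot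
  refine ⟨max K 0, le_max_right _ _, fun x hx y hy => ?_⟩
  rcases lt_or_ge 0 (h (x, y)) with hpos | hneg
  · exact le_trans (mul_nonpos_of_nonpos_of_nonneg (by simp) (sq_nonneg _)) hpos.le
  · have hxy : (x, y) ∈ t := ⟨⟨hx, hy⟩, hneg⟩
    rw [← le_div_iff₀ (pow_pos (dist_pos_on_t _ hxy) 2)]
    exact neg_le_of_abs_le ((hK _ hxy).trans (le_max_left _ _))

open RCLike (re)

variable {𝕜 E : Type*} [RCLike 𝕜] [NormedAddCommGroup E] [InnerProductSpace 𝕜 E]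
  [NormedSpace ℝ E] [IsScalarTower ℝ 𝕜 E] {s : Set E} {G N : E → E} {κ : ℝ}

lemma inner_sub_add_smul (x w z n : E) (ε : ℝ) :
    inner 𝕜 x (w - (z + ε • n)) = inner 𝕜 x (w - z) - ε • inner 𝕜 x n := by
  rw [← sub_sub, inner_sub_right, inner_smul_right_eq_smul]

lemma exists_forall_half_mul_sq_le_re_inner_shift (hs : IsCompact s) (hG : ContinuousOn G s)
    (hN : ContinuousOn N s) (hinward : ∀ z ∈ s, re (inner 𝕜 (G z) (N z)) < 0) (hκ : 0 < κ)
    (hconv : ∀ w ∈ s, ∀ z ∈ s, κ * ‖w - z‖ ^ 2 ≤ re (inner 𝕜 (G w) (w - z))) :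
    ∃ ε₀ : ℝ, 0 < ε₀ ∧ ∀ w ∈ s, ∀ z ∈ s, ∀ ε : ℝ, 0 ≤ ε → ε < ε₀ →
      κ / 2 * ‖w - z‖ ^ 2 ≤ re (inner 𝕜 (G w) (w - (z + ε • N z))) := by
  obtain ⟨K, hK0, hK⟩ := exists_neg_mul_sq_dist_le_of_pos_diag hs
    (h := fun p => -re (inner 𝕜 (G p.1) (N p.2)))
    (RCLike.continuous_re.comp_continuousOn
      ((hG.comp continuousOn_fst fun p (hp : p ∈ s ×ˢ s) => hp.1).inner
        (hN.comp continuousOn_snd fun p hp => hp.2))).neg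
    (fun z hz => neg_pos.2 (hinward z hz))
  refine ⟨κ / (2 * (K + 1)), by positivity, fun w hw z hz ε hε0 hε => ?_⟩
  have hεK : ε * K ≤ κ / 2 := by
    rw [lt_div_iff₀ (by positivity)] at hε
    linarith
  have shift_ge : -(ε * K) * ‖w - z‖ ^ 2 ≤ -(ε * re (inner 𝕜 (G w) (N z))) := by
    have := mul_le_mul_of_nonneg_left (hK w hw z hz) hε0
    rw [dist_eq_norm] at this
    linarith
  rw [inner_sub_add_smul, map_sub, RCLike.smul_re]
  linarith [hconv w hw z hz, mul_le_mul_of_nonneg_right hεK (sq_nonneg ‖w - z‖)]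

lemma exists_forall_norm_inner_shift_sub_le (hs : IsCompact s) (hG : ContinuousOn G s)
    (hN : ContinuousOn N s) :
    ∃ M : ℝ, ∀ w ∈ s, ∀ z ∈ s, ∀ ε : ℝ, 0 ≤ ε →
      ‖inner 𝕜 (G w) (w - (z + ε • N z)) - inner 𝕜 (G w) (w - z)‖ ≤ M * ε := by
  obtain ⟨A, hA⟩ := hs.exists_bound_of_continuousOn hG
  obtain ⟨B, hB⟩ := hs.exists_bound_of_continuousOn hN
  refine ⟨A * B, fun w hw z hz ε hε => ?_⟩
  calc ‖inner 𝕜 (G w) (w - (z + ε • N z)) - inner 𝕜 (G w) (w - z)‖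
      = ‖inner 𝕜 (G w) (N z)‖ * ε := by
        rw [inner_sub_add_smul, sub_sub_cancel_left, norm_neg, norm_smul, Real.norm_of_nonneg hε,
          mul_comm]
    _ ≤ ‖G w‖ * ‖N z‖ * ε := by gcongr; exact norm_inner_le_norm _ _
    _ ≤ A * B * ε := by
        have := (norm_nonneg _).trans (hA w hw)
        gcongr
        exacts [hA w hw, hB z hz]

theorem exists_forall_norm_inv_sq_inner_shift_sub_le (hs : IsCompact s) (hG : ContinuousOn G s)
    (hN : ContinuousOn N s) (hinward : ∀ z ∈ s, re (inner 𝕜 (G z) (N z)) < 0) (hκ : 0 < κ)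
    (hconv : ∀ w ∈ s, ∀ z ∈ s, κ * ‖w - z‖ ^ 2 ≤ re (inner 𝕜 (G w) (w - z))) :
    ∃ C ε₀ : ℝ, 0 < ε₀ ∧ ∀ β ∈ Icc (0 : ℝ) 1, ∀ w ∈ s, ∀ z ∈ s, w ≠ z →
      ∀ ε : ℝ, 0 < ε → ε < ε₀ →
        ‖(inner 𝕜 (G w) (w - (z + ε • N z)) ^ 2)⁻¹ - (inner 𝕜 (G w) (w - z) ^ 2)⁻¹‖
          ≤ C * ε ^ β * ‖w - z‖ ^ (-(4 + 2 * β)) := by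
  obtain ⟨ε₀, hε₀, hlower⟩ :=
    exists_forall_half_mul_sq_le_re_inner_shift hs hG hN hinward hκ hconv
  obtain ⟨M, hM⟩ := exists_forall_norm_inner_shift_sub_le (𝕜 := 𝕜) hs hG hN
  refine ⟨2 / (κ / 2) ^ 2 * max 1 (M / (κ / 2)), ε₀, hε₀,
    fun β hβ w hw z hz hwz ε hε hεε₀ => ?_⟩
  have hshifted := hlower w hw z hz ε hε.le hεε₀
  have hunshifted := hlower w hw z hz 0 le_rfl hε₀
  rw [zero_smul, add_zero] at hunshifted
  exact norm_inv_sq_sub_inv_sq_le_rpow (half_pos hκ) hε.le (norm_sub_pos_iff.2 hwz) hβ.1 hβ.2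
    (hshifted.trans (RCLike.re_le_norm _)) (hunshifted.trans (RCLike.re_le_norm _))
    (hM w hw z hz ε hε.le)

end InwardShift

section BoundaryOfDm

variable {m : ℝ}

lemma gradRhom_apply_zero (m : ℝ) (w : C2) :
    gradRhom m w 0 = (m * |(w 0).re| ^ (m - 1) * Real.sign (w 0).re : ℝ) + (2 * (w 0).im : ℝ) * I :=
  rfl

lemma gradRhom_apply_one (m : ℝ) (w : C2) : gradRhom m w 1 = 2 * w 1 := rfl

lemma continuous_gradRhom (hm : 1 < m) : Continuous (gradRhom m) := by
  refine (PiLp.continuous_toLp 2 _).comp (continuous_pi fun i => ?_)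
  fin_cases i
  · exact (continuous_ofReal.comp ((continuous_mul_abs_rpow_mul_sign hm).comp
      (by fun_prop : Continuous fun w : C2 => (w 0).re))).add (by fun_prop)
  · exact (by fun_prop : Continuous fun w : C2 => 2 * w 1)

lemma gradRhom_ne_zero (hm : 0 < m) {w : C2} (hw : w ∈ bDm m) : gradRhom m w ≠ 0 := by
  intro hgrad
  have h0 : gradRhom m w 0 = 0 := by rw [hgrad]; rfl
  have h1 : w 1 = 0 := by
    have : gradRhom m w 1 = 0 := by rw [hgrad]; rfl
    simpa [gradRhom_apply_one] using this
  have him : (w 0).im = 0 := by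
    simpa [gradRhom_apply_zero] using congrArg Complex.im h0
  have hre : (w 0).re = 0 := by
    by_contra hne
    refine mul_ne_zero (?_ : m * |(w 0).re| ^ (m - 1) ≠ 0) (Real.sign_eq_zero_iff.not.2 hne) ?_
    · positivity
    · simpa [gradRhom_apply_zero] using congrArg Complex.re h0
  have hrho : rhom m w = 0 := hw
  simp [rhom, h1, him, hre, Real.zero_rpow hm.ne'] at hrho

lemma continuousOn_Nm (hm : 1 < m) : ContinuousOn (Nm m) (bDm m) := by
  have hgrad := (continuous_gradRhom hm).continuousOn (s := bDm m)
  exact (hgrad.norm.inv₀ fun z hz =>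
    norm_ne_zero_iff.2 (gradRhom_ne_zero (by linarith) hz)).neg.smul hgrad

lemma re_inner_gradRhom_Nm (m : ℝ) (z : C2) :
    (inner ℂ (gradRhom m z) (Nm m z)).re = -‖gradRhom m z‖ := by
  have hself : (inner ℂ (gradRhom m z) (gradRhom m z)).re = ‖gradRhom m z‖ ^ 2 :=
    inner_self_eq_norm_sq (𝕜 := ℂ) (gradRhom m z)
  rw [Nm, inner_smul_right_eq_smul, Complex.smul_re, hself, smul_eq_mul, neg_mul, sq,
    ← mul_assoc, inv_mul_mul_self]

lemma abs_re_le_one_of_mem_bDm (hm : 0 < m) {w : C2} (hw : w ∈ bDm m) : |(w 0).re| ≤ 1 := by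
  have hrho : ‖w 1‖ ^ 2 + |(w 0).re| ^ m + (w 0).im ^ 2 - 1 = 0 := hw
  rw [← Real.rpow_le_rpow_iff (abs_nonneg _) zero_le_one hm, Real.one_rpow]
  linarith [sq_nonneg ‖w 1‖, sq_nonneg (w 0).im]

lemma isCompact_bDm (hm : 0 < m) : IsCompact (bDm m) := by
  refine Metric.isCompact_of_isClosed_isBounded ?_ ?_
  · have hcont : Continuous (rhom m) := by
      unfold rhom
      fun_prop (disch := exact hm.le)
    exact isClosed_eq hcont continuous_const
  · refine (Metric.isBounded_closedBall (x := (0 : C2)) (r := √2)).subset fun w hw => ?_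
    have hrho : ‖w 1‖ ^ 2 + |(w 0).re| ^ m + (w 0).im ^ 2 - 1 = 0 := hw
    have hre : (w 0).re ^ 2 ≤ 1 := (sq_le_one_iff_abs_le_one _).2 (abs_re_le_one_of_mem_bDm hm hw)
    have hpow : 0 ≤ |(w 0).re| ^ m := by positivity
    rw [mem_closedBall_zero_iff, EuclideanSpace.norm_eq, Fin.sum_univ_two, Complex.sq_norm (w 0),
      Complex.normSq_apply]
    exact Real.sqrt_le_sqrt (by linarith)

lemma Deltam_eq_inner (m : ℝ) (w z : C2) :
    Deltam m w z = inner ℂ ((2⁻¹ : ℝ) • gradRhom m w) (w - z) := by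
  simp only [Deltam, PiLp.inner_apply, Fin.sum_univ_two, PiLp.smul_apply, PiLp.sub_apply,
    gradRhom_apply_zero, gradRhom_apply_one, RCLike.inner_apply, Complex.real_smul, map_mul,
    map_add, conj_ofReal, conj_I, map_ofNat]
  push_cast
  ring

lemma two_mul_re_Deltam (m : ℝ) (w z : C2) :
    2 * (Deltam m w z).re = rhom m w - rhom m z
      + (|(z 0).re| ^ m - |(w 0).re| ^ m
        - m * |(w 0).re| ^ (m - 1) * Real.sign (w 0).re * ((z 0).re - (w 0).re))
      + (w 0 - z 0).im ^ 2 + ‖w 1 - z 1‖ ^ 2 := by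
  simp only [Deltam, rhom, Complex.sq_norm, Complex.normSq_apply, add_re, mul_re, sub_re, sub_im,
    ofReal_re, ofReal_im, I_re, I_im, conj_re, conj_im, mul_im]
  ring

lemma mul_sq_le_re_Deltam (hm1 : 1 < m) (hm2 : m ≤ 2) {w z : C2} (hw : w ∈ bDm m)
    (hz : z ∈ bDm m) : m * (m - 1) / 4 * ‖w - z‖ ^ 2 ≤ (Deltam m w z).re := by
  have hm0 : 0 < m := by linarith
  have hρw : rhom m w = 0 := hw
  have hρz : rhom m z = 0 := hz
  have hre := abs_rpow_add_mul_sub_add_sq_le hm1 hm2 (abs_re_le_one_of_mem_bDm hm0 hw)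
    (abs_re_le_one_of_mem_bDm hm0 hz)
  have hcoeff : m * (m - 1) / 2 ≤ 1 := by nlinarith
  have him := mul_le_of_le_one_left (sq_nonneg (w 0 - z 0).im) hcoeff
  have hsnd := mul_le_of_le_one_left (sq_nonneg ‖w 1 - z 1‖) hcoeff
  have hnorm : ‖w - z‖ ^ 2
      = ((z 0).re - (w 0).re) ^ 2 + (w 0 - z 0).im ^ 2 + ‖w 1 - z 1‖ ^ 2 := by
    rw [EuclideanSpace.norm_sq_eq, Fin.sum_univ_two, PiLp.sub_apply, PiLp.sub_apply,
      Complex.sq_norm (w 0 - z 0), Complex.normSq_apply, sub_re]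
    ring
  rw [hnorm]
  linarith [two_mul_re_Deltam m w z]

end BoundaryOfDm

theorem stmt18_general (m : ℝ) (hm1 : 1 < m) (hm2 : m ≤ 2) :
    ∃ C ε₀ : ℝ, 0 < ε₀ ∧ ∀ β ∈ Set.Icc (0 : ℝ) 1,
      ∀ w ∈ bDm m, ∀ z ∈ bDm m, w ≠ z → ∀ ε : ℝ, 0 < ε → ε < ε₀ →
        ‖((Deltam m w (z + ε • Nm m z)) ^ 2)⁻¹ - ((Deltam m w z) ^ 2)⁻¹‖
          ≤ C * ε ^ β * ‖w - z‖ ^ (-(4 + 2 * β)) := by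
  have hm0 : 0 < m := by linarith
  have hκ : 0 < m * (m - 1) / 4 := by nlinarith
  have hinward : ∀ z ∈ bDm m, (inner ℂ ((2⁻¹ : ℝ) • gradRhom m z) (Nm m z)).re < 0 := by
    intro z hz
    have := norm_pos_iff.2 (gradRhom_ne_zero hm0 hz)
    rw [inner_smul_left_eq_star_smul, Complex.smul_re, re_inner_gradRhom_Nm]
    simpa
  have hconv : ∀ w ∈ bDm m, ∀ z ∈ bDm m, m * (m - 1) / 4 * ‖w - z‖ ^ 2
      ≤ (inner ℂ ((2⁻¹ : ℝ) • gradRhom m w) (w - z)).re := fun w hw z hz => by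
    rw [← Deltam_eq_inner]
    exact mul_sq_le_re_Deltam hm1 hm2 hw hz
  simp only [Deltam_eq_inner]
  exact exists_forall_norm_inv_sq_inner_shift_sub_le (isCompact_bDm hm0)
    ((continuous_gradRhom hm1).const_smul (2⁻¹ : ℝ)).continuousOn (continuousOn_Nm hm1)
    hinward hκ hconv

/-- Fix `m ∈ (1,2)` and `β ∈ (0,1)`. There are `C < ∞`, `ε₀ > 0` such that for all
`w, z ∈ bD_m` with `w ≠ z` and all `0 < ε < ε₀`:
`|Δ(w, z+εN(z))⁻² − Δ(w,z)⁻²| ≤ C·ε^β·|w−z|^{−(4+2β)}`. -/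
theorem stmt18 (m β : ℝ) (hm1 : 1 < m) (hm2 : m < 2) (hβ0 : 0 < β) (hβ1 : β < 1) :
    ∃ C ε₀ : ℝ, 0 < ε₀ ∧
      ∀ w ∈ bDm m, ∀ z ∈ bDm m, w ≠ z → ∀ ε : ℝ, 0 < ε → ε < ε₀ →
        ‖((Deltam m w (z + ε • Nm m z)) ^ 2)⁻¹ - ((Deltam m w z) ^ 2)⁻¹‖
          ≤ C * ε ^ β * ‖w - z‖ ^ (-(4 + 2 * β)) := by
  obtain ⟨C, ε₀, hε₀, h⟩ := stmt18_general m hm1 hm2.le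
  exact ⟨C, ε₀, hε₀, h β ⟨hβ0.le, hβ1.le⟩⟩

end
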